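/- If f is harmonic on an open set Ω ⊆ ℝ^n and Ω' ⊂ Ω is a compact subset, then for any multi-index c, sup_{Ω'} |D^c f| ≤ (n|c| / dist(Ω', ∂Ω))^{|c|} · sup_Ω |f|. -/

import Mathlib

/-- Partial derivative in the `i`-th coordinate direction of a scalar function on `ℝ^n`. -/
noncomputable def pdS {n : ℕ} (i : Fin n) (f : (Fin n → ℝ) → ℝ) : (Fin n → ℝ) → ℝ :=
  fun x => fderiv ℝ f x (Pi.single i 1)

/-- The iterated partial derivative `D^c = ∂^{|c|}/∂x_1^{c_1}⋯∂x_n^{c_n}` associated to a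
multi-index `c : Fin n → ℕ`. -/
noncomputable def DmultiS {n : ℕ} (c : Fin n → ℕ) (f : (Fin n → ℝ) → ℝ) :
    (Fin n → ℝ) → ℝ :=
  (((List.finRange n).flatMap fun i => List.replicate (c i) i)).foldr pdS f

/-!
Let `u` be harmonic with `‖u‖ ≤ M` on a ball of radius `r` centred at the origin, in dimension `n`,
and let `e` be a unit vector. The difference of `u` and its reflection in the hyperplane `e^⊥`
vanishes on that hyperplane and is at most `2M` on the sphere, so on the half ball
`0 ≤ ⟪e, x⟫` the maximum principle compares it with `2M` times an explicit harmonic quadratic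
polynomial whose derivative at the origin along `e` is `n / r`. This gives the gradient bound
`‖Du(0)‖ ≤ (n / r) M`. Since derivatives of harmonic functions are harmonic, the bound can be
applied `k` times on balls of radius `d / k`, which yields `‖D^k u‖ ≤ (n k / d)^k M` at distance
`d` from the boundary.
-/

open Filter InnerProductSpace Laplacian Metric Module Set Submodule Topology
open scoped ContDiff

section LocalMax

lemma deriv_deriv_nonpos_of_isLocalMax {h : ℝ → ℝ} {t : ℝ} (hmax : IsLocalMax h t)
    (hcont : ContinuousAt h t) : deriv (deriv h) t ≤ 0 := by
  by_contra! hpos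
  have hmin : IsLocalMin h t := isLocalMin_of_deriv_deriv_pos hpos hmax.deriv_eq_zero hcont
  have hconst : h =ᶠ[𝓝 t] fun _ ↦ h t := by
    filter_upwards [hmin, hmax] with s hle hge using le_antisymm hge hle
  have hderiv : deriv h =ᶠ[𝓝 t] fun _ ↦ 0 := by simpa using hconst.deriv
  simp [hderiv.deriv_eq] at hpos

variable {E : Type*} [NormedAddCommGroup E] [NormedSpace ℝ E]
  {F : Type*} [NormedAddCommGroup F] [NormedSpace ℝ F]

lemma fderiv_fderiv_apply_self_eq_deriv_deriv {f : E → F} {x : E} (hf : ContDiffAt ℝ 2 f x)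
    (v : E) : fderiv ℝ (fderiv ℝ f) x v v = deriv (deriv fun t : ℝ ↦ f (x + t • v)) 0 := by
  have hline (t : ℝ) : HasDerivAt (fun t : ℝ ↦ x + t • v) v t := by
    simpa using ((hasDerivAt_id t).smul_const v).const_add x
  have hdiff : ∀ᶠ y in 𝓝 (x + (0 : ℝ) • v), DifferentiableAt ℝ f y := by
    simpa using (hf.eventually (by simp)).mono fun y hy ↦ hy.differentiableAt (by simp)
  have hfirst : deriv (fun t : ℝ ↦ f (x + t • v)) =ᶠ[𝓝 0] fun t ↦ fderiv ℝ f (x + t • v) v :=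
    ((hline 0).continuousAt.eventually hdiff).mono fun t ht ↦
      (ht.hasFDerivAt.comp_hasDerivAt t (hline t)).deriv
  have hfderiv : DifferentiableAt ℝ (fderiv ℝ f) x :=
    (hf.fderiv_right (m := 1) le_rfl).differentiableAt one_ne_zero
  have hfderiv_line : HasDerivAt (fun t : ℝ ↦ fderiv ℝ f (x + t • v))
      (fderiv ℝ (fderiv ℝ f) x v) 0 :=
    hfderiv.hasFDerivAt.comp_hasDerivAt_of_eq 0 (hline 0) (by simp)
  have hsecond : HasDerivAt (fun t : ℝ ↦ fderiv ℝ f (x + t • v) v)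
      (fderiv ℝ (fderiv ℝ f) x v v) 0 := by
    simpa using hfderiv_line.clm_apply (hasDerivAt_const 0 v)
  rw [hfirst.deriv_eq, hsecond.deriv]

lemma fderiv_fderiv_apply_self_nonpos_of_isLocalMax {f : E → ℝ} {x : E}
    (hmax : IsLocalMax f x) (hf : ContDiffAt ℝ 2 f x) (v : E) :
    fderiv ℝ (fderiv ℝ f) x v v ≤ 0 := by
  rw [fderiv_fderiv_apply_self_eq_deriv_deriv hf v]
  have hline : ContinuousAt (fun t : ℝ ↦ x + t • v) 0 := by fun_prop
  have hx : x + (0 : ℝ) • v = x := by simp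
  refine deriv_deriv_nonpos_of_isLocalMax ?_ ?_
  · exact IsLocalMax.comp_continuous (g := fun t : ℝ ↦ x + t • v) (by rwa [hx]) hline
  · exact ContinuousAt.comp (g := f) (by rw [hx]; exact hf.continuousAt) hline

end LocalMax

section Laplacian

variable {E : Type*} [NormedAddCommGroup E] [InnerProductSpace ℝ E] [FiniteDimensional ℝ E]
  {E' : Type*} [NormedAddCommGroup E'] [InnerProductSpace ℝ E'] [FiniteDimensional ℝ E']
  {F : Type*} [NormedAddCommGroup F] [NormedSpace ℝ F]

lemma laplacian_eq_sum_fderiv_fderiv {ι : Type*} [Fintype ι] (b : OrthonormalBasis ι ℝ E)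
    (f : E → F) (x : E) : Δ f x = ∑ i, fderiv ℝ (fderiv ℝ f) x (b i) (b i) := by
  simp [laplacian_eq_iteratedFDeriv_orthonormalBasis f b, iteratedFDeriv_two_apply]

lemma laplacian_nonpos_of_isLocalMax {f : E → ℝ} {x : E} (hmax : IsLocalMax f x)
    (hf : ContDiffAt ℝ 2 f x) : Δ f x ≤ 0 := by
  rw [laplacian_eq_sum_fderiv_fderiv (stdOrthonormalBasis ℝ E)]
  exact Finset.sum_nonpos fun i _ ↦ fderiv_fderiv_apply_self_nonpos_of_isLocalMax hmax hf _

lemma laplacian_continuousLinearMap (ℓ : E →L[ℝ] F) : Δ (ℓ : E → F) = 0 := by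
  ext x
  have hfderiv : fderiv ℝ ℓ = fun _ ↦ ℓ := funext fun _ ↦ ℓ.fderiv
  simp [laplacian_eq_sum_fderiv_fderiv (stdOrthonormalBasis ℝ E), hfderiv]

lemma laplacian_diagonal (B : E →L[ℝ] E →L[ℝ] F) {ι : Type*} [Fintype ι]
    (b : OrthonormalBasis ι ℝ E) (x : E) :
    Δ (fun y ↦ B y y) x = (2 : ℝ) • ∑ i, B (b i) (b i) := by
  have hfirst : fderiv ℝ (fun y ↦ B y y) = (B + B.flip : E →L[ℝ] E →L[ℝ] F) := by
    ext y v
    have hB : HasFDerivAt (fun y ↦ B y y) _ y := B.hasFDerivAt.clm_apply (hasFDerivAt_id y)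
    simp [hB.fderiv]
  have hsecond : fderiv ℝ (fderiv ℝ fun y ↦ B y y) x = B + B.flip := by
    rw [hfirst, ContinuousLinearMap.fderiv]
  simp [laplacian_eq_sum_fderiv_fderiv b, hsecond, ← two_smul ℝ, Finset.smul_sum]

lemma laplacian_norm_sq (x : E) : Δ (fun y : E ↦ ‖y‖ ^ 2) x = 2 * finrank ℝ E := by
  have hsum : Δ (fun y : E ↦ inner ℝ y y) x =
      2 * ∑ i, inner ℝ (stdOrthonormalBasis ℝ E i) (stdOrthonormalBasis ℝ E i) :=
    laplacian_diagonal (innerSL ℝ) (stdOrthonormalBasis ℝ E) x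
  simpa [real_inner_self_eq_norm_sq] using hsum

lemma laplacian_inner_sq (e x : E) : Δ (fun y : E ↦ inner ℝ e y ^ 2) x = 2 * ‖e‖ ^ 2 := by
  simpa [← sq, OrthonormalBasis.sum_sq_inner_left] using
    laplacian_diagonal ((innerSL ℝ e).smulRight (innerSL ℝ e)) (stdOrthonormalBasis ℝ E) x

lemma laplacian_comp_linearIsometryEquiv (L : E ≃ₗᵢ[ℝ] E') (f : E' → F) :
    Δ (f ∘ L) = Δ f ∘ L := by
  ext x
  have hcomp : iteratedFDeriv ℝ 2 (f ∘ L) x =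
      (iteratedFDeriv ℝ 2 f (L x)).compContinuousLinearMap fun _ ↦ L := by
    simp only [← iteratedFDerivWithin_univ]
    exact L.toContinuousLinearEquiv.iteratedFDerivWithin_comp_right f uniqueDiffOn_univ
      (mem_univ _) 2
  have hdiag (v : E) : (fun i ↦ L (![v, v] i)) = ![L v, L v] := by
    ext i; fin_cases i <;> rfl
  let b := stdOrthonormalBasis ℝ E
  rw [Function.comp_apply, laplacian_eq_iteratedFDeriv_orthonormalBasis f (b.map L),
    laplacian_eq_iteratedFDeriv_orthonormalBasis (f ∘ L) b]
  simp [hcomp, hdiag]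

lemma harmonicAt_comp_linearIsometryEquiv (L : E ≃ₗᵢ[ℝ] E') {f : E' → F} {x : E}
    (hf : HarmonicAt f (L x)) : HarmonicAt (f ∘ L) x := by
  refine ⟨hf.1.comp x L.contDiff.contDiffAt, ?_⟩
  rw [laplacian_comp_linearIsometryEquiv]
  exact hf.2.comp_tendsto L.continuous.continuousAt

lemma harmonicAt_comp_const_add {f : E → F} {a x : E} (hf : HarmonicAt f (a + x)) :
    HarmonicAt (fun y ↦ f (a + y)) x := by
  have hlaplacian : Δ (fun y ↦ f (a + y)) = fun y ↦ Δ f (a + y) := by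
    ext y
    simp [laplacian_eq_iteratedFDeriv_stdOrthonormalBasis, iteratedFDeriv_comp_add_left]
  refine ⟨hf.1.comp x (by fun_prop), ?_⟩
  rw [hlaplacian]
  exact hf.2.comp_tendsto (continuous_const_add a).continuousAt

end Laplacian

section MaximumPrinciple

variable {E : Type*} [NormedAddCommGroup E] [InnerProductSpace ℝ E] [FiniteDimensional ℝ E]
  {K : Set E} {g : E → ℝ} {m : ℝ}

lemma le_of_laplacian_pos_of_le_on_frontier (hK : IsCompact K) (hcont : ContinuousOn g K)
    (hdiff : ∀ x ∈ interior K, ContDiffAt ℝ 2 g x) (hpos : ∀ x ∈ interior K, 0 < Δ g x)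
    (hfrontier : ∀ x ∈ frontier K, g x ≤ m) : ∀ x ∈ K, g x ≤ m := by
  intro x hx
  obtain ⟨y, hy, hmax⟩ := hK.exists_isMaxOn ⟨x, hx⟩ hcont
  have hy_not_interior : y ∉ interior K := fun hy' ↦
    (hpos y hy').not_ge <| laplacian_nonpos_of_isLocalMax
      (hmax.isLocalMax (mem_interior_iff_mem_nhds.mp hy')) (hdiff y hy')
  exact (hmax hx).trans (hfrontier y ⟨subset_closure hy, hy_not_interior⟩)

theorem le_of_laplacian_nonneg_of_le_on_frontier [Nontrivial E] (hK : IsCompact K)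
    (hcont : ContinuousOn g K) (hdiff : ∀ x ∈ interior K, ContDiffAt ℝ 2 g x)
    (hnonneg : ∀ x ∈ interior K, 0 ≤ Δ g x) (hfrontier : ∀ x ∈ frontier K, g x ≤ m) :
    ∀ x ∈ K, g x ≤ m := by
  obtain ⟨C, hC, hbound⟩ := hK.isBounded.exists_pos_norm_le
  have hsq : ContDiff ℝ 2 fun y : E ↦ ‖y‖ ^ 2 := contDiff_norm_sq ℝ
  -- Adding `ε‖y‖²` makes the Laplacian strictly positive.
  have hperturbed (ε : ℝ) (hε : 0 < ε) :
      ∀ x ∈ K, (g + ε • fun y : E ↦ ‖y‖ ^ 2) x ≤ m + ε * C ^ 2 := by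
    have hεsq : ContDiff ℝ 2 (ε • fun y : E ↦ ‖y‖ ^ 2) := hsq.const_smul ε
    refine le_of_laplacian_pos_of_le_on_frontier hK (hcont.add hεsq.continuous.continuousOn)
      (fun x hx ↦ (hdiff x hx).add hεsq.contDiffAt) (fun x hx ↦ ?_) fun x hx ↦ ?_
    · rw [(hdiff x hx).laplacian_add hεsq.contDiffAt, laplacian_smul ε hsq.contDiffAt,
        laplacian_norm_sq, smul_eq_mul]
      have hdim : 0 < (finrank ℝ E : ℝ) := by exact_mod_cast finrank_pos
      have hlaplacian : 0 ≤ Δ g x := hnonneg x hx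
      positivity
    · have hnorm : ‖x‖ ^ 2 ≤ C ^ 2 := by gcongr; exact hbound x (hK.isClosed.frontier_subset hx)
      exact add_le_add (hfrontier x hx) (mul_le_mul_of_nonneg_left hnorm hε.le)
  intro x hx
  refine le_of_forall_pos_le_add fun δ hδ ↦ ?_
  calc g x ≤ g x + δ / C ^ 2 * ‖x‖ ^ 2 := le_add_of_nonneg_right (by positivity)
    _ ≤ m + δ / C ^ 2 * C ^ 2 := hperturbed _ (by positivity) x hx
    _ = m + δ := by field_simp

end MaximumPrinciple

section Barrier

variable {E : Type*} [NormedAddCommGroup E] [InnerProductSpace ℝ E]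

/-- The harmonic quadratic polynomial used as a barrier on the half ball
`{x | ‖x‖ ≤ r, 0 ≤ ⟪e, x⟫}`, for a unit vector `e`: it is at least `1` on the spherical part of the
boundary, nonnegative on the flat part, and grows like `n ⟪e, x⟫ / r` at the origin along `e`,
where `n` is the dimension. -/
noncomputable def halfBallBarrier (r : ℝ) (e x : E) : ℝ :=
  (‖x‖ ^ 2 - finrank ℝ E * inner ℝ e x ^ 2) / r ^ 2 + finrank ℝ E * inner ℝ e x / r

variable {r : ℝ} {e x : E}

lemma harmonicAt_halfBallBarrier [FiniteDimensional ℝ E] (r : ℝ) (he : ‖e‖ = 1) (x : E) :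
    HarmonicAt (halfBallBarrier r e) x := by
  have hnorm : ContDiff ℝ 2 fun y : E ↦ ‖y‖ ^ 2 := contDiff_norm_sq ℝ
  have hinner : ContDiff ℝ 2 fun y : E ↦ inner ℝ e y ^ 2 :=
    (contDiff_const.inner ℝ contDiff_id).pow 2
  have hscaled : ContDiff ℝ 2 ((finrank ℝ E : ℝ) • fun y : E ↦ inner ℝ e y ^ 2) :=
    hinner.const_smul (finrank ℝ E : ℝ)
  let Q : E → ℝ := (fun y ↦ ‖y‖ ^ 2) - (finrank ℝ E : ℝ) • fun y ↦ inner ℝ e y ^ 2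
  have hQ : HarmonicAt Q x := by
    refine ⟨hnorm.contDiffAt.sub hscaled.contDiffAt, .of_forall fun y ↦ ?_⟩
    rw [hnorm.contDiffAt.laplacian_sub hscaled.contDiffAt,
      laplacian_smul _ hinner.contDiffAt, laplacian_norm_sq, laplacian_inner_sq, he]
    simp [mul_comm]
  have hlinear : HarmonicAt (innerSL ℝ e) x :=
    ⟨(innerSL ℝ e).contDiff.contDiffAt, by rw [laplacian_continuousLinearMap]⟩
  have hdecomp : halfBallBarrier r e =
      (r ^ 2)⁻¹ • Q + (finrank ℝ E / r) • (innerSL ℝ e : E → ℝ) := by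
    ext y
    simp only [halfBallBarrier, Q, Pi.add_apply, Pi.smul_apply, Pi.sub_apply, smul_eq_mul,
      innerSL_apply_apply]
    ring
  exact hdecomp ▸ hQ.const_smul.add hlinear.const_smul

lemma one_le_halfBallBarrier_of_norm_eq (hr : 0 < r) (he : ‖e‖ = 1) (hx : ‖x‖ = r)
    (hinner : 0 ≤ inner ℝ e x) : 1 ≤ halfBallBarrier r e x := by
  have hinner_le : inner ℝ e x / r ≤ 1 := by
    rw [div_le_one hr]
    simpa [he, hx] using real_inner_le_norm e x
  have hfactor : halfBallBarrier r e x =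
      1 + finrank ℝ E * (inner ℝ e x / r) * (1 - inner ℝ e x / r) := by
    rw [halfBallBarrier, hx]
    field_simp
    ring
  rw [hfactor, le_add_iff_nonneg_right]
  exact mul_nonneg (by positivity) (sub_nonneg.mpr hinner_le)

lemma halfBallBarrier_nonneg_of_inner_eq_zero (hinner : inner ℝ e x = 0) :
    0 ≤ halfBallBarrier r e x := by
  have hvalue : halfBallBarrier r e x = ‖x‖ ^ 2 / r ^ 2 := by simp [halfBallBarrier, hinner]
  rw [hvalue]
  positivity

lemma halfBallBarrier_smul_self_le [FiniteDimensional ℝ E] (he : ‖e‖ = 1) (r t : ℝ) :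
    halfBallBarrier r e (t • e) ≤ finrank ℝ E * t / r := by
  have hinner : inner ℝ e (t • e) = t := by simp [inner_smul_right, he]
  have hnorm : ‖t • e‖ ^ 2 = t ^ 2 := by simp [norm_smul, he]
  have : Nontrivial E := ⟨e, 0, by rintro rfl; simp at he⟩
  have hdim : (1 : ℝ) ≤ finrank ℝ E := by exact_mod_cast finrank_pos (R := ℝ) (M := E)
  rw [halfBallBarrier, hinner, hnorm, add_le_iff_nonpos_left]
  exact div_nonpos_of_nonpos_of_nonneg (by nlinarith [sq_nonneg t]) (sq_nonneg r)

end Barrier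

section GradientBound

lemma fderiv_apply_le_of_sub_antipode_le {V : Type*} [NormedAddCommGroup V] [NormedSpace ℝ V]
    {u : V → ℝ} {e : V} {r C : ℝ} (hr : 0 < r) (hu : DifferentiableAt ℝ u 0)
    (hle : ∀ t ∈ Ioc 0 r, u (t • e) - u (t • -e) ≤ 2 * C * t) : fderiv ℝ u 0 e ≤ C := by
  let h : ℝ → ℝ := fun t ↦ u (t • e) - u (t • -e)
  have hline (v : V) : HasDerivAt (fun t : ℝ ↦ u (t • v)) (fderiv ℝ u 0 v) 0 :=
    hu.hasFDerivAt.comp_hasDerivAt_of_eq 0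
      (by simpa using (hasDerivAt_id (0 : ℝ)).smul_const v) (by simp)
  have hderiv : HasDerivAt h (2 * fderiv ℝ u 0 e) 0 :=
    ((hline e).sub (hline (-e))).congr_deriv (by rw [map_neg]; ring)
  have hslope : Tendsto (fun t ↦ t⁻¹ * h t) (𝓝[>] 0) (𝓝 (2 * fderiv ℝ u 0 e)) := by
    simpa [h] using hderiv.tendsto_slope_zero_right
  have hslope_le : ∀ᶠ t in 𝓝[>] 0, t⁻¹ * h t ≤ 2 * C := by
    filter_upwards [Ioc_mem_nhdsGT hr] with t ht
    rw [inv_mul_le_iff₀ ht.1, mul_comm t]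
    exact hle t ht
  linarith [le_of_tendsto hslope hslope_le]

variable {E : Type*} [NormedAddCommGroup E] [InnerProductSpace ℝ E]
  {r M : ℝ} {e : E}

lemma frontier_halfBall_subset (r : ℝ) (e : E) :
    frontier (closedBall 0 r ∩ {x : E | 0 ≤ inner ℝ e x}) ⊆
      {x | 0 ≤ inner ℝ e x ∧ ‖x‖ = r ∨ inner ℝ e x = 0} := by
  have hcont : Continuous fun x : E ↦ inner ℝ e x := by fun_prop
  refine (frontier_inter_subset _ _).trans ?_
  rintro x (⟨hsphere, hhalf⟩ | ⟨-, hplane⟩)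
  · rw [(isClosed_le continuous_const hcont).closure_eq] at hhalf
    exact .inl ⟨hhalf, by simpa using frontier_closedBall_subset_sphere hsphere⟩
  · exact .inr (frontier_le_subset_eq continuous_const hcont hplane).symm

variable [FiniteDimensional ℝ E]

lemma sub_reflection_le_halfBallBarrier {u : E → ℝ} (hr : 0 < r) (he : ‖e‖ = 1)
    (hu : HarmonicOnNhd u (closedBall 0 r)) (hM : ∀ x ∈ closedBall 0 r, |u x| ≤ M) {x : E}
    (hx : x ∈ closedBall 0 r) (hinner : 0 ≤ inner ℝ e x) :
    u x - u ((ℝ ∙ e)ᗮ.reflection x) ≤ 2 * M * halfBallBarrier r e x := by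
  have : Nontrivial E := ⟨e, 0, by rintro rfl; simp at he⟩
  let R := (ℝ ∙ e)ᗮ.reflection
  have hR_mem {y : E} (hy : y ∈ closedBall 0 r) : R y ∈ closedBall 0 r := by simpa using hy
  let K : Set E := closedBall 0 r ∩ {y | 0 ≤ inner ℝ e y}
  have hK : IsCompact K :=
    (isCompact_closedBall 0 r).inter_right (isClosed_le (by fun_prop) (by fun_prop))
  let w : E → ℝ := u - u ∘ R - (2 * M) • halfBallBarrier r e
  have hw : HarmonicOnNhd w K := fun y hy ↦
    ((hu y hy.1).sub (harmonicAt_comp_linearIsometryEquiv R (hu _ (hR_mem hy.1)))).sub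
      (harmonicAt_halfBallBarrier r he y).const_smul
  suffices hw_nonpos : ∀ y ∈ K, w y ≤ 0 by
    simpa [w, R] using hw_nonpos x ⟨hx, hinner⟩
  refine le_of_laplacian_nonneg_of_le_on_frontier hK hw.contDiffOn.continuousOn
    (fun y hy ↦ (hw y (interior_subset hy)).1)
    (fun y hy ↦ (hw y (interior_subset hy)).2.eq_of_nhds.ge) fun y hy ↦ ?_
  have hyK : y ∈ K := hK.isClosed.frontier_subset hy
  have hM_nonneg : 0 ≤ M := (abs_nonneg _).trans (hM y hyK.1)
  have hw_apply : w y = u y - u (R y) - 2 * M * halfBallBarrier r e y := rfl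
  rw [hw_apply, sub_nonpos]
  rcases frontier_halfBall_subset r e hy with ⟨hpos, hsphere⟩ | hplane
  · calc u y - u (R y) ≤ M + M :=
          (le_abs_self _).trans <| (abs_sub _ _).trans <|
            add_le_add (hM y hyK.1) (hM _ (hR_mem hyK.1))
      _ = 2 * M * 1 := by ring
      _ ≤ 2 * M * halfBallBarrier r e y := by
          gcongr; exact one_le_halfBallBarrier_of_norm_eq hr he hsphere hpos
  · have hRy : R y = y :=
      reflection_mem_subspace_eq_self (mem_orthogonal_singleton_iff_inner_right.mpr hplane)
    rw [hRy, sub_self]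
    exact mul_nonneg (by positivity) (halfBallBarrier_nonneg_of_inner_eq_zero hplane)


lemma sub_antipode_le_of_abs_le_on_closedBall {u : E → ℝ} (hr : 0 < r) (he : ‖e‖ = 1)
    (hu : HarmonicOnNhd u (closedBall 0 r)) (hM : ∀ x ∈ closedBall 0 r, |u x| ≤ M) {t : ℝ}
    (ht : t ∈ Ioc 0 r) : u (t • e) - u (t • -e) ≤ 2 * (finrank ℝ E / r * M) * t := by
  have hM_nonneg : 0 ≤ M := (abs_nonneg _).trans (hM 0 (by simpa using hr.le))
  have hreflect : (ℝ ∙ e)ᗮ.reflection (t • e) = t • -e := by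
    rw [map_smul, reflection_orthogonalComplement_singleton_eq_neg]
  calc u (t • e) - u (t • -e) ≤ 2 * M * halfBallBarrier r e (t • e) := by
        rw [← hreflect]
        exact sub_reflection_le_halfBallBarrier hr he hu hM
          (by simpa [norm_smul, he, abs_of_pos ht.1] using ht.2)
          (by simpa [inner_smul_right, he] using ht.1.le)
    _ ≤ 2 * M * (finrank ℝ E * t / r) := by
        gcongr; exact halfBallBarrier_smul_self_le he r t
    _ = 2 * (finrank ℝ E / r * M) * t := by ring

lemma fderiv_apply_le_of_abs_le_on_closedBall {u : E → ℝ} {a : E} (hr : 0 < r) (he : ‖e‖ = 1)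
    (hu : HarmonicOnNhd u (closedBall a r)) (hM : ∀ x ∈ closedBall a r, |u x| ≤ M) :
    fderiv ℝ u a e ≤ finrank ℝ E / r * M := by
  let v : E → ℝ := fun y ↦ u (a + y)
  have hmem (y : E) (hy : y ∈ closedBall 0 r) : a + y ∈ closedBall a r := by simpa using hy
  have hv : HarmonicOnNhd v (closedBall 0 r) := fun y hy ↦
    harmonicAt_comp_const_add (hu _ (hmem y hy))
  have hv_diff : DifferentiableAt ℝ v 0 :=
    (hv 0 (mem_closedBall_self hr.le)).1.differentiableAt two_ne_zero
  have hv_fderiv : fderiv ℝ v 0 = fderiv ℝ u a := by simp [v, fderiv_comp_add_left]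
  rw [← hv_fderiv]
  exact fderiv_apply_le_of_sub_antipode_le hr hv_diff fun t ht ↦
    sub_antipode_le_of_abs_le_on_closedBall hr he hv (fun y hy ↦ hM _ (hmem y hy)) ht

variable {F : Type*} [NormedAddCommGroup F] [NormedSpace ℝ F] {u : E → F} {a : E}

lemma norm_fderiv_le_of_norm_le_on_closedBall (hr : 0 < r)
    (hu : HarmonicOnNhd u (closedBall a r)) (hM : ∀ x ∈ closedBall a r, ‖u x‖ ≤ M) :
    ‖fderiv ℝ u a‖ ≤ finrank ℝ E / r * M := by
  have ha : a ∈ closedBall a r := mem_closedBall_self hr.le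
  have hM_nonneg : 0 ≤ M := (norm_nonneg _).trans (hM a ha)
  have hu_diff : DifferentiableAt ℝ u a := (hu a ha).1.differentiableAt two_ne_zero
  have hdual (e : E) (he : ‖e‖ = 1) (φ : F →L[ℝ] ℝ) :
      φ (fderiv ℝ u a e) ≤ finrank ℝ E / r * M * ‖φ‖ := by
    have hφu_fderiv : fderiv ℝ (φ ∘ u) a e = φ (fderiv ℝ u a e) := by
      rw [(φ.hasFDerivAt.comp a hu_diff.hasFDerivAt).fderiv]
      rfl
    calc φ (fderiv ℝ u a e) ≤ finrank ℝ E / r * (‖φ‖ * M) := by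
          rw [← hφu_fderiv]
          exact fderiv_apply_le_of_abs_le_on_closedBall hr he (hu.comp_CLM φ)
            fun x hx ↦ φ.le_opNorm_of_le (hM x hx)
      _ = finrank ℝ E / r * M * ‖φ‖ := by ring
  refine ContinuousLinearMap.opNorm_le_of_unit_norm (by positivity) fun e he ↦ ?_
  refine NormedSpace.norm_le_dual_bound ℝ _ (by positivity) fun φ ↦ ?_
  exact abs_le'.mpr ⟨hdual e he φ, by simpa using hdual e he (-φ)⟩

theorem norm_fderiv_le_of_norm_le_on_ball (hr : 0 < r) (hu : HarmonicOnNhd u (ball a r))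
    (hM : ∀ x ∈ ball a r, ‖u x‖ ≤ M) : ‖fderiv ℝ u a‖ ≤ finrank ℝ E / r * M := by
  have hlimit : Tendsto (fun ρ ↦ finrank ℝ E / ρ * M) (𝓝[<] r) (𝓝 (finrank ℝ E / r * M)) :=
    ((tendsto_const_nhds.div tendsto_id hr.ne').mul_const M).mono_left nhdsWithin_le_nhds
  refine ge_of_tendsto hlimit ?_
  filter_upwards [Ioo_mem_nhdsLT hr] with ρ hρ
  have hsub : closedBall a ρ ⊆ ball a r := closedBall_subset_ball hρ.2
  exact norm_fderiv_le_of_norm_le_on_closedBall hρ.1 (hu.mono hsub) fun x hx ↦ hM x (hsub hx)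

end GradientBound

section DerivativesOfHarmonic

section ThirdDerivative

variable {V F : Type*} [NormedAddCommGroup V] [NormedSpace ℝ V] [NormedAddCommGroup F]
  [NormedSpace ℝ F] {u : V → F} {x : V}

lemma hasFDerivAt_fderiv_fderiv_apply (hu : ContDiffAt ℝ 3 u x) (q v : V) :
    HasFDerivAt (fun y ↦ fderiv ℝ (fderiv ℝ u) y q v)
      (((fderiv ℝ (fderiv ℝ (fderiv ℝ u)) x).flip q).flip v) x := by
  have hfderiv : ContDiffAt ℝ 2 (fderiv ℝ u) x := hu.fderiv_right (by norm_num)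
  have hdiff : DifferentiableAt ℝ (fderiv ℝ (fderiv ℝ u)) x :=
    (hfderiv.fderiv_right (m := 1) le_rfl).differentiableAt one_ne_zero
  simpa using (hdiff.hasFDerivAt.clm_apply (hasFDerivAt_const q x)).clm_apply
    (hasFDerivAt_const v x)

lemma fderiv_fderiv_fderiv_apply_comm_left (hu : ContDiffAt ℝ 3 u x) (p q v : V) :
    fderiv ℝ (fderiv ℝ (fderiv ℝ u)) x p q v = fderiv ℝ (fderiv ℝ (fderiv ℝ u)) x q p v := by
  have hfderiv : ContDiffAt ℝ 2 (fderiv ℝ u) x := hu.fderiv_right (by norm_num)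
  rw [(hfderiv.isSymmSndFDerivAt (by simp)).eq p q]

lemma fderiv_fderiv_fderiv_apply_comm_right (hu : ContDiffAt ℝ 3 u x) (p q v : V) :
    fderiv ℝ (fderiv ℝ (fderiv ℝ u)) x p q v = fderiv ℝ (fderiv ℝ (fderiv ℝ u)) x p v q := by
  have hsymm : (fun y ↦ fderiv ℝ (fderiv ℝ u) y q v) =ᶠ[𝓝 x]
      fun y ↦ fderiv ℝ (fderiv ℝ u) y v q := by
    filter_upwards [hu.eventually (by simp)] with y hy
    exact (hy.isSymmSndFDerivAt (by simp; norm_num)).eq q v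
  exact DFunLike.congr_fun ((hasFDerivAt_fderiv_fderiv_apply hu q v).unique
    ((hasFDerivAt_fderiv_fderiv_apply hu v q).congr_of_eventuallyEq hsymm)) p

end ThirdDerivative

variable {E : Type*} [NormedAddCommGroup E] [InnerProductSpace ℝ E] [FiniteDimensional ℝ E]
  {F : Type*} [NormedAddCommGroup F] [NormedSpace ℝ F] {u : E → F} {x : E}

lemma laplacian_fderiv (hu : ContDiffAt ℝ 3 u x) : Δ (fderiv ℝ u) x = fderiv ℝ (Δ u) x := by
  let b := stdOrthonormalBasis ℝ E
  have hΔu : HasFDerivAt (Δ u)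
      (∑ i, ((fderiv ℝ (fderiv ℝ (fderiv ℝ u)) x).flip (b i)).flip (b i)) x := by
    rw [funext (laplacian_eq_sum_fderiv_fderiv b u)]
    exact HasFDerivAt.fun_sum fun i _ ↦ hasFDerivAt_fderiv_fderiv_apply hu (b i) (b i)
  ext v
  simp only [laplacian_eq_sum_fderiv_fderiv b, hΔu.fderiv, sum_apply,
    ContinuousLinearMap.flip_apply]
  refine Finset.sum_congr rfl fun i _ ↦ ?_
  rw [fderiv_fderiv_fderiv_apply_comm_right hu, fderiv_fderiv_fderiv_apply_comm_left hu]

lemma harmonicAt_fderiv (hu : HarmonicAt u x) (hsmooth : ContDiffAt ℝ 3 u x) :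
    HarmonicAt (fderiv ℝ u) x := by
  refine ⟨hsmooth.fderiv_right (by norm_num), ?_⟩
  filter_upwards [hsmooth.eventually (by simp), hu.2.eventuallyEq_nhds] with y hy hlaplacian
  simp [laplacian_fderiv hy, hlaplacian.fderiv_eq]

lemma harmonicAt_iteratedFDeriv (k : ℕ) (hu : HarmonicAt u x)
    (hsmooth : ContDiffAt ℝ (k + 2) u x) : HarmonicAt (iteratedFDeriv ℝ k u) x := by
  induction k with
  | zero =>
    rw [iteratedFDeriv_zero_eq_comp]
    exact (harmonicAt_comp_CLE_iff
      (continuousMultilinearCurryFin0 ℝ E F).symm.toContinuousLinearEquiv).mpr hu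
  | succ k ih =>
    rw [iteratedFDeriv_succ_eq_comp_left]
    have hk : HarmonicAt (iteratedFDeriv ℝ k u) x := ih (hsmooth.of_le (by gcongr; simp))
    have hk_smooth : ContDiffAt ℝ 3 (iteratedFDeriv ℝ k u) x :=
      hsmooth.iteratedFDeriv_right (by norm_cast; lia)
    exact (harmonicAt_comp_CLE_iff (continuousMultilinearCurryLeftEquiv ℝ
      (fun _ ↦ E) F).symm.toContinuousLinearEquiv).mpr (harmonicAt_fderiv hk hk_smooth)

end DerivativesOfHarmonic

section InteriorEstimate

variable {E : Type*} [NormedAddCommGroup E] [InnerProductSpace ℝ E] [FiniteDimensional ℝ E]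
  {F : Type*} [NormedAddCommGroup F] [NormedSpace ℝ F] {u : E → F} {Ω : Set E} {M : ℝ}

lemma norm_iteratedFDeriv_le_of_ball_subset {k : ℕ} {ρ : ℝ} (hρ : 0 < ρ) (hΩ : IsOpen Ω)
    (hsmooth : ContDiffOn ℝ (k + 1) u Ω) (hu : HarmonicOnNhd u Ω) (hM : ∀ x ∈ Ω, ‖u x‖ ≤ M)
    {a : E} (ha : a ∈ Ω) (hball : ball a (k * ρ) ⊆ Ω) :
    ‖iteratedFDeriv ℝ k u a‖ ≤ (finrank ℝ E / ρ) ^ k * M := by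
  induction k generalizing a with
  | zero => simpa using hM a ha
  | succ k ih =>
    have hnested {y : E} (hy : y ∈ ball a ρ) : ball y (k * ρ) ⊆ ball a ((k + 1 : ℕ) * ρ) := by
      refine ball_subset_ball' ?_
      push_cast
      linarith [mem_ball.mp hy]
    have hsub : ball a ρ ⊆ Ω :=
      (ball_subset_ball (le_mul_of_one_le_left hρ.le (by simp))).trans hball
    have hharmonic : HarmonicOnNhd (iteratedFDeriv ℝ k u) (ball a ρ) := fun y hy ↦
      harmonicAt_iteratedFDeriv k (hu y (hsub hy))
        ((hsmooth.contDiffAt (hΩ.mem_nhds (hsub hy))).of_le (by norm_cast))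
    have hbound : ∀ y ∈ ball a ρ, ‖iteratedFDeriv ℝ k u y‖ ≤ (finrank ℝ E / ρ) ^ k * M :=
      fun y hy ↦ ih (hsmooth.of_le (by gcongr; simp)) (hsub hy) ((hnested hy).trans hball)
    calc ‖iteratedFDeriv ℝ (k + 1) u a‖ = ‖fderiv ℝ (iteratedFDeriv ℝ k u) a‖ :=
          norm_fderiv_iteratedFDeriv.symm
      _ ≤ finrank ℝ E / ρ * ((finrank ℝ E / ρ) ^ k * M) :=
          norm_fderiv_le_of_norm_le_on_ball hρ hharmonic hbound
      _ = (finrank ℝ E / ρ) ^ (k + 1) * M := by ring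

lemma ball_subset_of_forall_le_dist_frontier {V : Type*} [NormedAddCommGroup V] [NormedSpace ℝ V]
    {Ω : Set V} (hΩ : IsOpen Ω) {a : V} {d : ℝ} (ha : a ∈ Ω)
    (hd : ∀ y ∈ frontier Ω, d ≤ dist a y) : ball a d ⊆ Ω := by
  rcases le_or_gt d 0 with hd_nonpos | hd_pos
  · simp [ball_eq_empty.mpr hd_nonpos]
  refine (convex_ball a d).isPreconnected.subset_of_closure_inter_subset hΩ
    ⟨a, mem_ball_self hd_pos, ha⟩ fun y hy ↦ ?_
  by_contra hyΩ
  exact (hd y ⟨hy.1, by rwa [hΩ.interior_eq]⟩).not_gt (by simpa [dist_comm] using hy.2)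

theorem harmonic_derivative_bound_general (hΩ : IsOpen Ω) (k : ℕ)
    (hsmooth : ContDiffOn ℝ (k + 1) u Ω) (hu : HarmonicOnNhd u Ω) (hM : ∀ x ∈ Ω, ‖u x‖ ≤ M)
    {d : ℝ} (hd : 0 < d) {x : E} (hx : x ∈ Ω) (hdist : ∀ y ∈ frontier Ω, d ≤ dist x y) :
    ‖iteratedFDeriv ℝ k u x‖ ≤ (finrank ℝ E * k / d) ^ k * M := by
  rcases Nat.eq_zero_or_pos k with rfl | hk
  · simpa using hM x hx
  have hradius : (k : ℝ) * (d / k) = d := by field_simp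
  have hball : ball x (k * (d / k)) ⊆ Ω :=
    hradius.symm ▸ ball_subset_of_forall_le_dist_frontier hΩ hx hdist
  have hbound := norm_iteratedFDeriv_le_of_ball_subset (by positivity) hΩ hsmooth hu hM hx hball
  rwa [div_div_eq_mul_div] at hbound

end InteriorEstimate

section Coordinates

/-- The identification of Euclidean space, where the estimate holds, with the space `Fin n → ℝ` of
coordinate vectors, whose norm is the sup norm. -/
noncomputable abbrev euclideanCoords (n : ℕ) : EuclideanSpace ℝ (Fin n) ≃L[ℝ] (Fin n → ℝ) :=
  EuclideanSpace.equiv (Fin n) ℝ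

variable {n : ℕ} {f : (Fin n → ℝ) → ℝ} {y : EuclideanSpace ℝ (Fin n)}

lemma pdS_euclideanCoords (i : Fin n) (f : (Fin n → ℝ) → ℝ) (y : EuclideanSpace ℝ (Fin n)) :
    pdS i f (euclideanCoords n y) =
      fderiv ℝ (f ∘ euclideanCoords n) y (EuclideanSpace.basisFun (Fin n) ℝ i) := by
  rw [ContinuousLinearEquiv.comp_right_fderiv, EuclideanSpace.basisFun_apply]
  rfl

lemma foldr_pdS_eq_iteratedFDeriv (l : List (Fin n))
    (hf : ContDiffAt ℝ l.length (f ∘ euclideanCoords n) y) :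
    l.foldr pdS f (euclideanCoords n y) = iteratedFDeriv ℝ l.length (f ∘ euclideanCoords n) y
      fun j ↦ EuclideanSpace.basisFun (Fin n) ℝ (l.get j) := by
  induction l generalizing y with
  | nil => simp
  | cons i l ih =>
    have hdiff : DifferentiableAt ℝ (iteratedFDeriv ℝ l.length (f ∘ euclideanCoords n)) y :=
      hf.differentiableAt_iteratedFDeriv (by exact_mod_cast Nat.lt_succ_self _)
    have htail : l.foldr pdS f ∘ euclideanCoords n =ᶠ[𝓝 y] fun z ↦
        iteratedFDeriv ℝ l.length (f ∘ euclideanCoords n) z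
          fun j ↦ EuclideanSpace.basisFun (Fin n) ℝ (l.get j) := by
      filter_upwards [hf.eventually (by simp)] with z hz using ih (hz.of_le (by simp))
    rw [List.foldr_cons, pdS_euclideanCoords, htail.fderiv_eq]
    exact (hdiff.iteratedFDeriv_succ_apply_left'
      (m := fun j ↦ EuclideanSpace.basisFun (Fin n) ℝ ((i :: l).get j))).symm

lemma abs_DmultiS_le_norm_iteratedFDeriv (c : Fin n → ℕ)
    (hf : ContDiffAt ℝ (∑ i, c i : ℕ) (f ∘ euclideanCoords n) y) :
    |DmultiS c f (euclideanCoords n y)| ≤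
      ‖iteratedFDeriv ℝ (∑ i, c i) (f ∘ euclideanCoords n) y‖ := by
  let l := (List.finRange n).flatMap fun i ↦ List.replicate (c i) i
  have hl : l.length = ∑ i, c i := by simp [l, List.length_flatMap, Fin.sum_univ_def]
  rw [← hl] at hf ⊢
  rw [DmultiS, foldr_pdS_eq_iteratedFDeriv l hf]
  simpa using (iteratedFDeriv ℝ l.length (f ∘ euclideanCoords n) y).le_opNorm
    fun j ↦ EuclideanSpace.basisFun (Fin n) ℝ (l.get j)

lemma laplacian_comp_euclideanCoords (hf : ContDiffAt ℝ 2 (f ∘ euclideanCoords n) y) :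
    Δ (f ∘ euclideanCoords n) y = ∑ i, pdS i (pdS i f) (euclideanCoords n y) := by
  rw [laplacian_eq_iteratedFDeriv_orthonormalBasis _ (EuclideanSpace.basisFun (Fin n) ℝ)]
  refine Finset.sum_congr rfl fun i _ ↦ ?_
  have hpair : ![EuclideanSpace.basisFun (Fin n) ℝ i, EuclideanSpace.basisFun (Fin n) ℝ i] =
      fun j ↦ EuclideanSpace.basisFun (Fin n) ℝ ([i, i].get j) := by
    ext1 j; fin_cases j <;> rfl
  rw [hpair]
  exact (foldr_pdS_eq_iteratedFDeriv [i, i] hf).symm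

variable {Ω : Set (Fin n → ℝ)}

lemma harmonicOnNhd_comp_euclideanCoords (hΩ : IsOpen Ω) (hf : ContDiffOn ℝ 2 f Ω)
    (hharm : ∀ x ∈ Ω, ∑ i, pdS i (pdS i f) x = 0) :
    HarmonicOnNhd (f ∘ euclideanCoords n) (euclideanCoords n ⁻¹' Ω) := by
  have hsmooth (y : EuclideanSpace ℝ (Fin n)) (hy : euclideanCoords n y ∈ Ω) :
      ContDiffAt ℝ 2 (f ∘ euclideanCoords n) y :=
    (hf.contDiffAt (hΩ.mem_nhds hy)).comp y (euclideanCoords n).contDiff.contDiffAt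
  refine fun y hy ↦ ⟨hsmooth y hy, ?_⟩
  filter_upwards [(hΩ.preimage (euclideanCoords n).continuous).mem_nhds hy] with z hz
  exact (laplacian_comp_euclideanCoords (hsmooth z hz)).trans (hharm _ hz)

lemma le_dist_frontier_preimage_euclideanCoords {d : ℝ}
    (hdist : ∀ z ∈ frontier Ω, d ≤ dist (euclideanCoords n y) z) :
    ∀ z ∈ frontier (euclideanCoords n ⁻¹' Ω), d ≤ dist y z := by
  intro z hz
  have hz' : euclideanCoords n z ∈ frontier Ω :=
    ((euclideanCoords n).toHomeomorph.preimage_frontier Ω).ge hz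
  calc d ≤ dist (euclideanCoords n y) (euclideanCoords n z) := hdist _ hz'
    _ ≤ dist y z :=
      ((PiLp.lipschitzWith_ofLp 2 fun _ : Fin n ↦ ℝ).dist_le_mul y z).trans_eq (by simp)

end Coordinates

/-- If `f` is harmonic on an open set `Ω ⊆ ℝ^n` and `Ω' ⊆ Ω` is compact,
then for any multi-index `c` one has the interior derivative estimate
`sup_{Ω'} |D^c f| ≤ (n|c| / dist(Ω', ∂Ω))^{|c|} · sup_Ω |f|`
(stated for any `0 < d ≤ dist(Ω', ∂Ω)` and any `M ≥ sup_Ω |f|`). -/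
theorem harmonic_derivative_bound {n : ℕ}
    (f : (Fin n → ℝ) → ℝ) (Ω Ω' : Set (Fin n → ℝ))
    (hΩ : IsOpen Ω) (hΩ' : IsCompact Ω') (hsub : Ω' ⊆ Ω)
    (hf : ContDiffOn ℝ (⊤ : ℕ∞) f Ω)
    (hharm : ∀ x ∈ Ω, ∑ i, pdS i (pdS i f) x = 0)
    (M : ℝ) (hM : ∀ x ∈ Ω, |f x| ≤ M)
    (d : ℝ) (hd : 0 < d)
    (hdist : ∀ x ∈ Ω', ∀ y ∈ frontier Ω, d ≤ dist x y)
    (c : Fin n → ℕ) :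
    ∀ x ∈ Ω', |DmultiS c f x| ≤ ((n * (∑ i, c i) : ℝ) / d) ^ (∑ i, c i) * M := by
  intro x hx
  let y : EuclideanSpace ℝ (Fin n) := WithLp.toLp 2 x
  have hopen : IsOpen (euclideanCoords n ⁻¹' Ω) := hΩ.preimage (euclideanCoords n).continuous
  have hsmooth : ContDiffOn ℝ ∞ (f ∘ euclideanCoords n) (euclideanCoords n ⁻¹' Ω) :=
    hf.comp (euclideanCoords n).contDiff.contDiffOn (mapsTo_preimage _ _)
  have hharmonic := harmonicOnNhd_comp_euclideanCoords hΩ (contDiffOn_infty.mp hf 2) hharm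
  calc |DmultiS c f x| ≤ ‖iteratedFDeriv ℝ (∑ i, c i) (f ∘ euclideanCoords n) y‖ :=
        abs_DmultiS_le_norm_iteratedFDeriv c
          ((hsmooth.contDiffAt (hopen.mem_nhds (hsub hx))).of_le (mod_cast le_top))
    _ ≤ (finrank ℝ (EuclideanSpace ℝ (Fin n)) * (∑ i, c i : ℕ) / d) ^ (∑ i, c i) * M :=
        harmonic_derivative_bound_general hopen _ (hsmooth.of_le (mod_cast le_top)) hharmonic
          (fun z hz ↦ hM _ hz) hd (hsub hx) (le_dist_frontier_preimage_euclideanCoords (hdist x hx))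
    _ = (n * (∑ i, c i) / d) ^ (∑ i, c i) * M := by simp
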